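/- For every derivable type judgement Γ ⊢ A in GSeTT, the judgement ⟦Γ⟧_B ⊢ ⟦A⟧_B is derivable in HoTT (Lemma 4.1, type part). -/

import Mathlib

/-! ### Deep embedding of the fragment of Martin-Löf type theory ("HoTT") -/

/-- HoTT variable names: `Sum.inl n` is the image of CaTT/GSeTT variable `n`,
`Sum.inr k` are extra HoTT-only names. -/
abbrev HVar : Type := ℕ ⊕ ℕ

/-- The fixed variable `B`, not the name of any CaTT/GSeTT variable. -/
def Bv : HVar := Sum.inr 0

mutual
/-- Pre-terms of HoTT. `J A u x y e P p` is the Paulin-Mohring eliminator with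
base point `u : A`, motive `P` (with bound variables `x y e`) and base case `p`. -/
inductive HTm : Type
  | var : HVar → HTm
  | refl : HTy → HTm → HTm
  | J : HTy → HTm → HVar → HVar → HVar → HTy → HTm → HTm
  | app : HTm → HTm → HTm
  | lam : HVar → HTy → HTm → HTm

/-- Pre-types of HoTT: the Tarski universe `univ`, `el`, identity types and Π-types. -/
inductive HTy : Type
  | univ : HTy
  | el : HTm → HTy
  | id : HTy → HTm → HTm → HTy
  | pi : HVar → HTy → HTy → HTy
end

/-- Pre-substitutions of HoTT (head = most recent binding). -/
abbrev HSubst := List (HVar × HTm)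
/-- Pre-contexts of HoTT (head = most recent declaration). -/
abbrev HCtx := List (HVar × HTy)

def hlookup : HSubst → HVar → HTm
  | [], x => .var x
  | (y, t) :: γ, x => if y = x then t else hlookup γ x

/-- Remove the bindings of a bound variable from a substitution. -/
def hdrop (γ : HSubst) (x : HVar) : HSubst := γ.filter (fun q => q.1 ≠ x)

mutual
/-- Action of substitutions on HoTT pre-terms. -/
def hsubTm : HTm → HSubst → HTm
  | .var x, γ => hlookup γ x
  | .refl A u, γ => .refl (hsubTy A γ) (hsubTm u γ)
  | .J A u x y e P p, γ =>
      .J (hsubTy A γ) (hsubTm u γ) x y e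
        (hsubTy P (hdrop (hdrop (hdrop γ x) y) e)) (hsubTm p γ)
  | .app f u, γ => .app (hsubTm f γ) (hsubTm u γ)
  | .lam x A u, γ => .lam x (hsubTy A γ) (hsubTm u (hdrop γ x))
/-- Action of substitutions on HoTT pre-types. -/
def hsubTy : HTy → HSubst → HTy
  | .univ, _ => .univ
  | .el a, γ => .el (hsubTm a γ)
  | .id A u v, γ => .id (hsubTy A γ) (hsubTm u γ) (hsubTm v γ)
  | .pi x A B, γ => .pi x (hsubTy A γ) (hsubTy B (hdrop γ x))
end

/-- Composition of HoTT substitutions. -/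
def hcomp (δ γ : HSubst) : HSubst := δ.map (fun p => (p.1, hsubTm p.2 γ))

/-- The identity substitution of a context. -/
def hid (Γ : HCtx) : HSubst := Γ.map (fun p => (p.1, HTm.var p.1))

def hassoc : HCtx → HVar → Option HTy
  | [], _ => none
  | (y, A) :: Γ, x => if y = x then some A else hassoc Γ x

mutual
/-- Definitional equality of HoTT pre-terms, generated by the computation rule
`J(A,u,P,p) v refl ≡ p` together with congruence rules. -/
inductive HTmEq : HTm → HTm → Prop
  | jbeta (A : HTy) (u : HTm) (x y e : HVar) (P : HTy) (p v : HTm) (B : HTy) (w : HTm) :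
      HTmEq (.app (.app (.J A u x y e P p) v) (.refl B w)) p
  | refl (u : HTm) : HTmEq u u
  | symm : HTmEq u v → HTmEq v u
  | trans : HTmEq u v → HTmEq v w → HTmEq u w
  | reflCong : HTyEq A A' → HTmEq u u' → HTmEq (.refl A u) (.refl A' u')
  | JCong : HTyEq A A' → HTmEq u u' → HTyEq P P' → HTmEq p p' →
      HTmEq (.J A u x y e P p) (.J A' u' x y e P' p')
  | appCong : HTmEq f f' → HTmEq u u' → HTmEq (.app f u) (.app f' u')
  | lamCong : HTyEq A A' → HTmEq u u' → HTmEq (.lam x A u) (.lam x A' u')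

/-- Definitional equality of HoTT pre-types. -/
inductive HTyEq : HTy → HTy → Prop
  | refl (A : HTy) : HTyEq A A
  | symm : HTyEq A B → HTyEq B A
  | trans : HTyEq A B → HTyEq B C → HTyEq A C
  | elCong : HTmEq a a' → HTyEq (.el a) (.el a')
  | idCong : HTyEq A A' → HTmEq u u' → HTmEq v v' → HTyEq (.id A u v) (.id A' u' v')
  | piCong : HTyEq A A' → HTyEq B B' → HTyEq (.pi x A B) (.pi x A' B')
end

mutual
/-- Validity of HoTT contexts: `⊢ Γ`. -/
inductive HCtxJ : HCtx → Prop
  | nil : HCtxJ []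
  | cons : HCtxJ Γ → HTyJ Γ A → HCtxJ ((x, A) :: Γ)

/-- Validity of HoTT types: `Γ ⊢ A`. -/
inductive HTyJ : HCtx → HTy → Prop
  | univ : HCtxJ Γ → HTyJ Γ .univ
  | el : HTmJ Γ a .univ → HTyJ Γ (.el a)
  | id : HTmJ Γ u A → HTmJ Γ v A → HTyJ Γ (.id A u v)
  | pi : HTyJ Γ A → HTyJ ((x, A) :: Γ) B → HTyJ Γ (.pi x A B)
  | conv : HTyJ Γ A → HTyEq A B → HTyJ Γ B

/-- Typing of HoTT terms: `Γ ⊢ u : A`. -/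
inductive HTmJ : HCtx → HTm → HTy → Prop
  | var : HCtxJ Γ → hassoc Γ x = some A → HTmJ Γ (.var x) A
  | refl : HTmJ Γ u A → HTmJ Γ (.refl A u) (.id A u u)
  | lam : HTyJ Γ A → HTmJ ((x, A) :: Γ) u B → HTmJ Γ (.lam x A u) (.pi x A B)
  | app : HTmJ Γ f (.pi x A B) → HTmJ Γ u A → HTmJ Γ (.app f u) (hsubTy B [(x, u)])
  | J : HTyJ Γ A → HTmJ Γ u A →
      HTyJ ((e, .id A (.var x) (.var y)) :: (y, A) :: (x, A) :: Γ) P →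
      HTmJ Γ p (hsubTy P [(x, u), (y, u), (e, .refl A u)]) →
      HTmJ Γ (.J A u x y e P p)
        (.pi y A (.pi e (.id A u (.var y)) (hsubTy P [(x, u)])))
  | conv : HTmJ Γ u A → HTyEq A B → HTmJ Γ u B
  | convTm : HTmJ Γ u A → HTmEq u v → HTmJ Γ v A

/-- Typing of HoTT substitutions: `Δ ⊢ γ : Γ`. -/
inductive HSubJ : HCtx → HSubst → HCtx → Prop
  | nil : HCtxJ Δ → HSubJ Δ [] []
  | cons : HSubJ Δ γ Γ → HTyJ Γ A → HTmJ Δ t (hsubTy A γ) →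
      HSubJ Δ ((x, t) :: γ) ((x, A) :: Γ)
end

mutual
/-- Iterated identity types `Idⁿ_A(u)`. -/
def idN : ℕ → HTy → HTm → HTy
  | 0, A, _ => A
  | n+1, A, u => .id (idN n A u) (reflN n A u) (reflN n A u)
/-- Iterated reflexivities `reflⁿ_{A,u}`. -/
def reflN : ℕ → HTy → HTm → HTm
  | 0, _, u => u
  | n+1, A, u => .refl (idN n A u) (reflN n A u)
end

/-- Π-lifting `Π_Γ.A`: successively bind all variables of `Γ`. -/
def piLift : HCtx → HTy → HTy
  | [], A => A
  | (x, T) :: Γ, A => piLift Γ (.pi x T A)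

/-- λ-lifting `λ_Γ.u`: successively bind all variables of `Γ`. -/
def lamLift : HCtx → HTm → HTm
  | [], u => u
  | (x, T) :: Γ, u => lamLift Γ (.lam x T u)

/-! ### The dependent type theory GSeTT -/

/-- Pre-types of GSeTT: `⋆` and `u →_A v` (terms of GSeTT are variables, i.e. `ℕ`). -/
inductive GTy : Type
  | obj : GTy
  | arr : GTy → ℕ → ℕ → GTy
deriving DecidableEq

/-- Pre-contexts of GSeTT (head = most recent declaration). -/
abbrev GCtx := List (ℕ × GTy)

def gassoc : GCtx → ℕ → Option GTy
  | [], _ => none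
  | (y, A) :: Γ, x => if y = x then some A else gassoc Γ x

mutual
/-- `⊢ Γ` in GSeTT. -/
inductive GCtxJ : GCtx → Prop
  | nil : GCtxJ []
  | cons : GCtxJ Γ → GTyJ Γ A → GCtxJ ((x, A) :: Γ)
/-- `Γ ⊢ A` in GSeTT. -/
inductive GTyJ : GCtx → GTy → Prop
  | obj : GCtxJ Γ → GTyJ Γ .obj
  | arr : GTmJ Γ u A → GTmJ Γ v A → GTyJ Γ (.arr A u v)
/-- `Γ ⊢ x : A` in GSeTT (terms are variables). -/
inductive GTmJ : GCtx → ℕ → GTy → Prop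
  | var : GCtxJ Γ → gassoc Γ x = some A → GTmJ Γ x A
end

/-- The variables declared in a GSeTT context. -/
def gvars (Γ : GCtx) : List ℕ := Γ.map Prod.fst

/-- The auxiliary judgement `Γ ⊢_ps x : A` recognising ps-contexts;
all declared variables are required to be pairwise distinct. -/
inductive GPsAux : GCtx → ℕ → GTy → Prop
  | pss (x : ℕ) : GPsAux [(x, .obj)] x .obj
  | pse : GPsAux Γ x A → y ∉ gvars Γ → f ∉ gvars Γ → f ≠ y →
      GPsAux ((f, .arr A x y) :: (y, A) :: Γ) f (.arr A x y)
  | psd : GPsAux Γ f (.arr A x y) → GPsAux Γ y A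

/-- The judgement `Γ ⊢_ps` recognising ps-contexts. -/
inductive GPs : GCtx → Prop
  | ps : GPsAux Γ x .obj → GPs Γ

/-- Dimension of a GSeTT type: `dim ⋆ = -1`, `dim (u →_A v) = dim A + 1`. -/
def gdim : GTy → ℤ
  | .obj => -1
  | .arr A _ _ => gdim A + 1

/-- Dimension of a GSeTT context: the maximal dimension of the types of its variables. -/
def gdimCtx (Γ : GCtx) : ℤ := (Γ.map (fun p => gdim p.2)).foldr max (-1)

/-- The `i`-source `∂ᵢ⁻Γ` of a ps-context. -/
def gsrc (i : ℤ) : GCtx → GCtx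
  | (f, F) :: (y, A) :: Δ =>
      if gdim A + 1 ≥ i then gsrc i Δ else (f, F) :: (y, A) :: gsrc i Δ
  | Γ => Γ

/-- The `i`-target `∂ᵢ⁺Γ` of a ps-context. -/
def gtgt (i : ℤ) : GCtx → GCtx
  | (f, F) :: (y, A) :: Δ =>
      if gdim A + 1 > i then gtgt i Δ
      else if gdim A + 1 = i then (y, A) :: (gtgt i Δ).tail
      else (f, F) :: (y, A) :: gtgt i Δ
  | Γ => Γ

/-- Translation of GSeTT types into HoTT. -/
def ginterpTy : GTy → HTy
  | .obj => .el (.var Bv)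
  | .arr A x y => .id (ginterpTy A) (.var (Sum.inl x)) (.var (Sum.inl y))

/-- Translation of GSeTT contexts into HoTT contexts (`⟦∅⟧_B = (B : Type)`). -/
def ginterpCtx : GCtx → HCtx
  | [] => [(Bv, .univ)]
  | (x, A) :: Γ => (Sum.inl x, ginterpTy A) :: ginterpCtx Γ


theorem hassoc_Bv (Γ : GCtx) : hassoc (ginterpCtx Γ) Bv = some .univ := by
  induction Γ with
  | nil => simp [ginterpCtx, hassoc]
  | cons p Γ ih => obtain ⟨x, A⟩ := p; simpa [ginterpCtx, hassoc, Bv] using ih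

theorem hassoc_interp (Γ : GCtx) (x : ℕ) (A : GTy) (h : gassoc Γ x = some A) :
    hassoc (ginterpCtx Γ) (Sum.inl x) = some (ginterpTy A) := by
  induction Γ with
  | nil => simp [gassoc] at h
  | cons p Γ ih =>
    obtain ⟨y, C⟩ := p
    by_cases hy : y = x
    · simp [gassoc, hy] at h
      simp [ginterpCtx, hassoc, hy, h]
    · simp [gassoc, hy] at h
      simpa [ginterpCtx, hassoc, hy] using ih h

mutual
theorem interp_ctx : ∀ {Γ : GCtx}, GCtxJ Γ → HCtxJ (ginterpCtx Γ)
  | _, .nil => .cons .nil (.univ .nil)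
  | _, .cons h1 h2 => .cons (interp_ctx h1) (interp_ty h2)
theorem interp_ty : ∀ {Γ : GCtx} {A : GTy}, GTyJ Γ A → HTyJ (ginterpCtx Γ) (ginterpTy A)
  | _, _, .obj h => .el (.var (interp_ctx h) (hassoc_Bv _))
  | _, _, .arr h1 h2 => .id (interp_tm h1) (interp_tm h2)
theorem interp_tm : ∀ {Γ : GCtx} {x : ℕ} {A : GTy}, GTmJ Γ x A →
    HTmJ (ginterpCtx Γ) (.var (Sum.inl x)) (ginterpTy A)
  | _, _, _, .var h1 h2 => .var (interp_ctx h1) (hassoc_interp _ _ _ h2)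
end

/-- Lemma 4.1, type part. -/
theorem stmt8 (Γ : GCtx) (A : GTy) (h : GTyJ Γ A) :
    HTyJ (ginterpCtx Γ) (ginterpTy A) := interp_ty h
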